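/- Let A be a unital C*-algebra, ε > 0, p a projection in A, and t ∈ A. If t is ε-almost regular, then tp is ε-almost regular. Moreover, if t ∈ R(A), then tp ∈ R(A). -/

import Mathlib

noncomputable section

/-- A closed two-sided ideal of a topological `ℂ`-algebra `A`. -/
structure ClosedIdeal (A : Type*) [NonUnitalNonAssocRing A] [Module ℂ A] [TopologicalSpace A] : Type _ where
  carrier : Submodule ℂ A
  mul_left_mem : ∀ (a x : A), x ∈ carrier → a * x ∈ carrier
  mul_right_mem : ∀ (a x : A), x ∈ carrier → x * a ∈ carrier
  isClosed : IsClosed (carrier : Set A)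

/-- `GL(A)`, the set of invertible elements of the unital algebra `A`. -/
def glSet (A : Type*) [Monoid A] : Set A := {a | IsUnit a}

/-- `R(A)`: the set of elements `a` of a unital algebra `A` such that for every closed
two-sided ideal `I`, if the image of `a` in `A/I` is left- or right-invertible, then it is
invertible.  (The image of `a` in `A/I` is left invertible iff `1 - b * a ∈ I` for some `b`,
right invertible iff `1 - a * b ∈ I` for some `b`, and invertible iff both hold for one `b`.) -/
def regSet (A : Type*) [Ring A] [Module ℂ A] [TopologicalSpace A] : Set A :=
  {a | ∀ I : ClosedIdeal A,
    ((∃ b, 1 - b * a ∈ I.carrier) ∨ (∃ b, 1 - a * b ∈ I.carrier)) →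
    ∃ b, 1 - b * a ∈ I.carrier ∧ 1 - a * b ∈ I.carrier}

/-- `|t| = (t* t)^(1/2)`, via the continuous functional calculus. -/
noncomputable def cstarAbs {A : Type*} [CStarAlgebra A] (t : A) : A :=
  cfc Real.sqrt (star t * t)

/-- `t` is `ε`-almost regular: the closed two-sided ideal generated by `f_ε(|t|)` equals the
closed two-sided ideal generated by `f_ε(|t*|)`, where `f_ε(x) = max (ε - x) 0`.  (Two elements
generate the same closed two-sided ideal iff they belong to exactly the same closed two-sided
ideals.) -/
def AlmostRegular {A : Type*} [CStarAlgebra A] (ε : ℝ) (t : A) : Prop :=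
  ∀ I : ClosedIdeal A,
    (cfc (fun x : ℝ => max (ε - x) 0) (cstarAbs t) ∈ I.carrier ↔
     cfc (fun x : ℝ => max (ε - x) 0) (cstarAbs (star t)) ∈ I.carrier)

/-- `p` is a projection: self-adjoint and idempotent. -/
def IsProjection {A : Type*} [Mul A] [Star A] (p : A) : Prop :=
  IsSelfAdjoint p ∧ IsIdempotentElem p

/-!
Let `π : A → A/I` be the quotient map of a closed two-sided ideal. For self-adjoint `a`, the
positive part `a⁺` lies in `I` exactly when `a ≤ y` for some `y ∈ I`; applied to `ε² - t*t`, this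
says that `f_ε(|t|) ∈ I` if and only if `π(t*t)` has a lift bounded below by `ε²`. Such a lift for
`tp` or for its adjoint makes `π(p t*t p)` or `π(t p t*)` invertible. In the first case the
idempotent `π p` is left invertible, hence `π p = 1`. In the second, `t p t* ≤ t t*` and the
regularity of `t` make `π t` invertible, so that `π p` is right invertible and again `π p = 1`.
Therefore `π(tp) = π t`, and regularity passes from `t` to `tp`. The same dichotomy settles
membership in `R(A)`.
-/

section Idempotent

variable {M : Type*} [Monoid M] {a b p t : M}

theorem eq_one_of_isIdempotentElem_of_isUnit_mul_left (hp : IsIdempotentElem p)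
    (h : IsUnit (b * p)) : p = 1 :=
  h.mul_left_cancel (by rw [mul_assoc, hp.eq, mul_one])

theorem eq_one_of_isIdempotentElem_of_isUnit_mul_right (hp : IsIdempotentElem p)
    (h : IsUnit (p * b)) : p = 1 :=
  h.mul_right_cancel (by rw [← mul_assoc, hp.eq, one_mul])

theorem isUnit_of_isUnit_mul_left_of_isUnit_mul_right (hl : IsUnit (a * t))
    (hr : IsUnit (t * b)) : IsUnit t := by
  obtain ⟨l, hl⟩ := hl.exists_left_inv
  obtain ⟨r, hr⟩ := hr.exists_right_inv
  exact isUnit_iff_exists_and_exists.2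
    ⟨⟨b * r, by rw [← mul_assoc, hr]⟩, ⟨l * a, by rw [mul_assoc, hl]⟩⟩

theorem eq_one_of_isIdempotentElem_of_isUnit_mul_mul (hp : IsIdempotentElem p)
    (ht : IsUnit t) (h : IsUnit (t * p * b)) : p = 1 := by
  lift t to Mˣ using ht
  rw [mul_assoc, Units.isUnit_units_mul] at h
  exact eq_one_of_isIdempotentElem_of_isUnit_mul_right hp h

end Idempotent

namespace ClosedIdeal

variable {A : Type*} [Ring A] [Module ℂ A] [TopologicalSpace A]

/-- The two-sided ideal of the ring `A` underlying a closed ideal, through which `A ⧸ I.toIdeal`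
is available as a ring. -/
def toIdeal (I : ClosedIdeal A) : Ideal A where
  carrier := I.carrier
  add_mem' := I.carrier.add_mem
  zero_mem' := I.carrier.zero_mem
  smul_mem' := I.mul_left_mem

instance (I : ClosedIdeal A) : I.toIdeal.IsTwoSided := ⟨fun b h ↦ I.mul_right_mem b _ h⟩

theorem mk_eq_one_iff (I : ClosedIdeal A) {x : A} :
    Ideal.Quotient.mk I.toIdeal x = 1 ↔ 1 - x ∈ I.carrier := by
  rw [eq_comm, ← map_one (Ideal.Quotient.mk I.toIdeal), Ideal.Quotient.eq]
  rfl

end ClosedIdeal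

section RegSet

variable {A : Type*} [Ring A] [Module ℂ A] [TopologicalSpace A] {a p t : A}

theorem mem_regSet_iff : a ∈ regSet A ↔ ∀ I : ClosedIdeal A,
    ((∃ b, b * Ideal.Quotient.mk I.toIdeal a = 1) ∨ ∃ b, Ideal.Quotient.mk I.toIdeal a * b = 1) →
      IsUnit (Ideal.Quotient.mk I.toIdeal a) := by
  simp only [regSet, Set.mem_ofPred_eq, isUnit_iff_exists, Ideal.Quotient.mk_surjective.exists,
    ← map_mul, ClosedIdeal.mk_eq_one_iff, and_comm]

theorem mul_mem_regSet_of_isIdempotentElem (hp : IsIdempotentElem p) (ht : t ∈ regSet A) :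
    t * p ∈ regSet A := by
  rw [mem_regSet_iff] at ht ⊢
  intro I hinv
  have hp' : IsIdempotentElem (Ideal.Quotient.mk I.toIdeal p) := hp.map _
  rw [map_mul] at hinv ⊢
  have hp_one : Ideal.Quotient.mk I.toIdeal p = 1 := by
    rcases hinv with ⟨b, hb⟩ | ⟨b, hb⟩
    · rw [← mul_assoc] at hb
      exact eq_one_of_isIdempotentElem_of_isUnit_mul_left hp' (hb ▸ isUnit_one)
    · have ht_unit := ht I (.inr ⟨_, by rwa [mul_assoc] at hb⟩)
      exact eq_one_of_isIdempotentElem_of_isUnit_mul_mul hp' ht_unit (hb ▸ isUnit_one)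
  rw [hp_one, mul_one] at hinv ⊢
  exact ht I hinv

end RegSet

section ClosedLeftIdeal

variable {A : Type*} [CStarAlgebra A] [PartialOrder A] [StarOrderedRing A]

theorem exists_norm_one_sub_mul_conjugate_le {z : A} (hz : 0 ≤ z) {δ : ℝ} (hδ : 0 < δ) :
    ∃ b : A, IsSelfAdjoint (1 - b * z) ∧ ‖(1 - b * z) * z * (1 - b * z)‖ ≤ δ := by
  have hpos (x : ℝ) (hx : x ∈ spectrum ℝ z) : 0 < x + δ :=
    add_pos_of_nonneg_of_pos (spectrum_nonneg_of_nonneg hz hx) hδ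
  have hinv : ContinuousOn (fun x : ℝ ↦ (x + δ)⁻¹) (spectrum ℝ z) :=
    ContinuousOn.inv₀ (by fun_prop) fun x hx ↦ ne_of_gt (hpos x hx)
  -- On the spectrum `g x = δ / (x + δ)`, so that `g x * x * g x ≤ δ`.
  let g : ℝ → ℝ := fun x ↦ 1 - (x + δ)⁻¹ * x
  have hg : ContinuousOn g (spectrum ℝ z) := by fun_prop
  have hres : 1 - cfc (fun x : ℝ ↦ (x + δ)⁻¹) z * z = cfc g z := by
    rw [cfc_sub .., cfc_mul .., cfc_id' ℝ z, cfc_const_one ℝ z]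
  have hconj : cfc g z * z * cfc g z = cfc (fun x ↦ g x * x * g x) z := by
    rw [cfc_mul (fun x ↦ g x * x) .., cfc_mul g (fun x ↦ x) .., cfc_id' ℝ z]
  refine ⟨cfc (fun x : ℝ ↦ (x + δ)⁻¹) z, hres ▸ cfc_predicate g z, ?_⟩
  rw [hres, hconj]
  refine norm_cfc_le hδ.le fun x hx ↦ ?_
  have hx₀ : 0 ≤ x := spectrum_nonneg_of_nonneg hz hx
  have hfactor : g x * x * g x = δ * (x * δ / (x + δ) ^ 2) := by
    have := (hpos x hx).ne'
    simp only [g]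
    field_simp
    ring
  have hle : x * δ ≤ (x + δ) ^ 2 := by nlinarith
  rw [hfactor, Real.norm_of_nonneg (by positivity)]
  exact mul_le_of_le_one_right hδ.le (div_le_one_of_le₀ hle (by positivity))

theorem mem_of_isClosed_of_star_mul_self_le {J : Ideal A} (hJ : IsClosed (J : Set A)) {h z : A}
    (hz : z ∈ J) (hle : star h * h ≤ z) : h ∈ J := by
  have hz₀ : 0 ≤ z := (star_mul_self_nonneg h).trans hle
  refine hJ.closure_subset (Metric.mem_closure_iff.2 fun η hη ↦ ?_)
  obtain ⟨δ, hδ, hδη⟩ : ∃ δ : ℝ, 0 < δ ∧ δ < η ^ 2 := exists_between (by positivity)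
  obtain ⟨b, hb, hnorm⟩ := exists_norm_one_sub_mul_conjugate_le hz₀ hδ
  refine ⟨h * (b * z), J.mul_mem_left _ (J.mul_mem_left _ hz), ?_⟩
  have hdiff : h - h * (b * z) = h * (1 - b * z) := by rw [mul_sub, mul_one]
  have hsq : star (h * (1 - b * z)) * (h * (1 - b * z)) ≤ (1 - b * z) * z * (1 - b * z) := by
    simpa only [star_mul, hb.star_eq, mul_assoc] using hb.conjugate_le_conjugate hle
  rw [dist_eq_norm, hdiff]
  refine lt_of_pow_lt_pow_left₀ 2 hη.le ?_
  calc ‖h * (1 - b * z)‖ ^ 2 = ‖star (h * (1 - b * z)) * (h * (1 - b * z))‖ := by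
        rw [CStarRing.norm_star_mul_self, sq]
    _ ≤ ‖(1 - b * z) * z * (1 - b * z)‖ :=
        CStarAlgebra.norm_le_norm_of_nonneg_of_le (star_mul_self_nonneg _) hsq
    _ < η ^ 2 := hnorm.trans_lt hδη

end ClosedLeftIdeal

section PosPart

variable {A : Type*} [CStarAlgebra A]

theorem cfc_max_zero_eq_posPart (f : ℝ → ℝ) (a : A)
    (hf : ContinuousOn f (spectrum ℝ a) := by cfc_cont_tac)
    (ha : IsSelfAdjoint a := by cfc_tac) :
    cfc (fun x ↦ max (f x) 0) a = (cfc f a)⁺ := by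
  rw [CFC.posPart_def, cfcₙ_eq_cfc, ← cfc_comp' (·⁺) f a]
  rfl

variable [PartialOrder A] [StarOrderedRing A]

theorem sqrt_posPart_mul_self_mul_sqrt_posPart {a : A} (ha : IsSelfAdjoint a) :
    CFC.sqrt a⁺ * a * CFC.sqrt a⁺ = a⁺ * a⁺ := by
  have hsqrt : CFC.sqrt a⁺ * CFC.sqrt a⁺ = a⁺ := CFC.sqrt_mul_sqrt_self a⁺
  have hsqrt_star : star (CFC.sqrt a⁺) = CFC.sqrt a⁺ := (CFC.sqrt_nonneg a⁺).star_eq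
  have hortho : CFC.sqrt a⁺ * a⁻ = 0 := by
    rw [← CStarRing.star_mul_self_eq_zero_iff, star_mul, hsqrt_star, mul_assoc,
      ← mul_assoc (CFC.sqrt a⁺), hsqrt, CFC.posPart_mul_negPart, mul_zero]
  calc CFC.sqrt a⁺ * a * CFC.sqrt a⁺
      = CFC.sqrt a⁺ * (a⁺ - a⁻) * CFC.sqrt a⁺ := by rw [CFC.posPart_sub_negPart a]
    _ = CFC.sqrt a⁺ * (CFC.sqrt a⁺ * CFC.sqrt a⁺) * CFC.sqrt a⁺ := by
        rw [mul_sub, hortho, sub_zero, hsqrt]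
    _ = a⁺ * a⁺ := by rw [← mul_assoc, hsqrt, mul_assoc, hsqrt]

theorem posPart_sq_sub_mul_self {r : ℝ} (hr : 0 ≤ r) {a : A} (ha : 0 ≤ a) :
    (algebraMap ℝ A (r ^ 2) - a * a)⁺ = (algebraMap ℝ A r + a) * (algebraMap ℝ A r - a)⁺ := by
  have hsub : algebraMap ℝ A r - a = cfc (fun x : ℝ ↦ r - x) a := by
    rw [cfc_sub .., cfc_const r a, cfc_id' ℝ a]
  have hadd : algebraMap ℝ A r + a = cfc (fun x : ℝ ↦ r + x) a := by
    rw [cfc_const_add .., cfc_id' ℝ a]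
  have hsq : algebraMap ℝ A (r ^ 2) - a * a = cfc (fun x : ℝ ↦ r ^ 2 - x * x) a := by
    rw [cfc_sub .., cfc_const (r ^ 2) a, cfc_mul .., cfc_id' ℝ a]
  rw [hsub, hadd, hsq, ← cfc_max_zero_eq_posPart .., ← cfc_max_zero_eq_posPart .., ← cfc_mul ..]
  refine cfc_congr fun x hx ↦ ?_
  have hx₀ : 0 ≤ x := spectrum_nonneg_of_nonneg ha hx
  rw [mul_max_of_nonneg _ _ (add_nonneg hr hx₀)]
  ring_nf

theorem posPart_sq_sub_mul_self_mem_iff {J : Ideal A} {r : ℝ} (hr : 0 < r) {a : A} (ha : 0 ≤ a) :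
    (algebraMap ℝ A (r ^ 2) - a * a)⁺ ∈ J ↔ (algebraMap ℝ A r - a)⁺ ∈ J := by
  have hunit : IsUnit (algebraMap ℝ A r + a) :=
    ((isStrictlyPositive_algebraMap hr).add_nonneg ha).isUnit
  rw [posPart_sq_sub_mul_self hr.le ha, J.unit_mul_mem_iff_mem hunit]

variable {J : Ideal A} [J.IsTwoSided]

theorem posPart_mem_iff_exists_le (hJ : IsClosed (J : Set A)) {a : A} (ha : IsSelfAdjoint a) :
    a⁺ ∈ J ↔ ∃ y ∈ J, a ≤ y := by
  refine ⟨fun h ↦ ⟨a⁺, h, CFC.le_posPart ha⟩, ?_⟩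
  rintro ⟨y, hy, hle⟩
  refine mem_of_isClosed_of_star_mul_self_le hJ (z := CFC.sqrt a⁺ * y * CFC.sqrt a⁺)
    (J.mul_mem_right _ (J.mul_mem_left _ hy)) ?_
  rw [(CFC.posPart_nonneg a).star_eq, ← sqrt_posPart_mul_self_mul_sqrt_posPart ha]
  exact conjugate_le_conjugate_of_nonneg hle (CFC.sqrt_nonneg a⁺)

end PosPart

section HasLiftGE

/-- The class `q ∈ A ⧸ J` is represented by some `c ≥ r` in `A`. For a closed ideal `J` of a
C⋆-algebra this encodes `r ≤ q` without putting a C⋆-algebra structure on `A ⧸ J`. -/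
def HasLiftGE {A : Type*} [Ring A] [Algebra ℝ A] [LE A] {J : Ideal A} [J.IsTwoSided]
    (r : ℝ) (q : A ⧸ J) : Prop :=
  ∃ c : A, Ideal.Quotient.mk J c = q ∧ algebraMap ℝ A r ≤ c

section Order

variable {A : Type*} [Ring A] [Algebra ℝ A] [PartialOrder A] [IsOrderedAddMonoid A]
  {J : Ideal A} [J.IsTwoSided] {r : ℝ} {a b : A}

theorem hasLiftGE_mk_iff :
    HasLiftGE r (Ideal.Quotient.mk J a) ↔ ∃ y ∈ J, algebraMap ℝ A r - a ≤ y := by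
  constructor
  · rintro ⟨c, hca, hc⟩
    exact ⟨c - a, Ideal.Quotient.eq.1 hca, sub_le_sub_right hc a⟩
  · rintro ⟨y, hy, hle⟩
    refine ⟨a + y, ?_, sub_le_iff_le_add'.1 hle⟩
    rw [map_add, Ideal.Quotient.eq_zero_iff_mem.2 hy, add_zero]

theorem HasLiftGE.mono (h : HasLiftGE r (Ideal.Quotient.mk J a)) (hab : a ≤ b) :
    HasLiftGE r (Ideal.Quotient.mk J b) := by
  rw [hasLiftGE_mk_iff] at h ⊢
  exact h.imp fun y ⟨hy, hle⟩ ↦ ⟨hy, (sub_le_sub_left hab _).trans hle⟩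

end Order

variable {A : Type*} [CStarAlgebra A] [PartialOrder A] [StarOrderedRing A]
  {J : Ideal A} [J.IsTwoSided] {r : ℝ}

theorem HasLiftGE.isUnit {q : A ⧸ J} (h : HasLiftGE r q) (hr : 0 < r) : IsUnit q := by
  obtain ⟨c, rfl, hc⟩ := h
  exact ((isStrictlyPositive_algebraMap hr).of_le hc).isUnit.map (Ideal.Quotient.mk J)

theorem posPart_algebraMap_sub_mem_iff_hasLiftGE (hJ : IsClosed (J : Set A)) {a : A}
    (ha : IsSelfAdjoint a) :
    (algebraMap ℝ A r - a)⁺ ∈ J ↔ HasLiftGE r (Ideal.Quotient.mk J a) := by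
  rw [hasLiftGE_mk_iff, posPart_mem_iff_exists_le hJ ((IsSelfAdjoint.algebraMap A (.all r)).sub ha)]

end HasLiftGE

section AlmostRegular

theorem IsProjection.mul_mul_star_mul_le {R : Type*} [Ring R] [StarRing R] [PartialOrder R]
    [StarOrderedRing R] {p : R} (hp : IsProjection p) (t : R) :
    t * p * star (t * p) ≤ t * star t := by
  have hle : p ≤ 1 := IsStarProjection.le_one ⟨hp.2, hp.1⟩
  calc t * p * star (t * p) = t * (p * p) * star t := by
        simp only [star_mul, hp.1.star_eq, mul_assoc]
    _ ≤ t * 1 * star t := by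
        rw [hp.2.eq]
        exact star_right_conjugate_le_conjugate hle t
    _ = t * star t := by rw [mul_one]

variable {A : Type*} [CStarAlgebra A] {ε : ℝ} {p t : A}

section Order

variable [PartialOrder A] [StarOrderedRing A]

theorem cstarAbs_eq_abs (t : A) : cstarAbs t = CFC.abs t := by
  rw [cstarAbs, CFC.abs, CFC.sqrt_eq_real_sqrt _ (star_mul_self_nonneg t), cfcₙ_eq_cfc]

theorem cfc_max_sub_cstarAbs_mem_iff (I : ClosedIdeal A) (hε : 0 < ε) (t : A) :
    cfc (fun x : ℝ ↦ max (ε - x) 0) (cstarAbs t) ∈ I.carrier ↔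
      HasLiftGE (ε ^ 2) (Ideal.Quotient.mk I.toIdeal (star t * t)) := by
  have habs : 0 ≤ CFC.abs t := CFC.abs_nonneg t
  rw [cstarAbs_eq_abs, cfc_max_zero_eq_posPart (fun x ↦ ε - x) .., cfc_sub ..,
    cfc_const ε (CFC.abs t), cfc_id' ℝ (CFC.abs t),
    ← posPart_algebraMap_sub_mem_iff_hasLiftGE I.isClosed (.star_mul_self t), ← CFC.abs_mul_abs,
    posPart_sq_sub_mul_self_mem_iff hε habs]
  rfl

theorem almostRegular_iff (hε : 0 < ε) : AlmostRegular ε t ↔ ∀ I : ClosedIdeal A,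
    HasLiftGE (ε ^ 2) (Ideal.Quotient.mk I.toIdeal (star t * t)) ↔
      HasLiftGE (ε ^ 2) (Ideal.Quotient.mk I.toIdeal (t * star t)) := by
  simp only [AlmostRegular, cfc_max_sub_cstarAbs_mem_iff _ hε, star_star]

end Order

theorem AlmostRegular.mul_isProjection (hε : 0 < ε) (hp : IsProjection p)
    (ht : AlmostRegular ε t) : AlmostRegular ε (t * p) := by
  let _ : PartialOrder A := CStarAlgebra.spectralOrder A
  have _ : StarOrderedRing A := CStarAlgebra.spectralOrderedRing A
  rw [almostRegular_iff hε] at ht ⊢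
  intro I
  let π := Ideal.Quotient.mk I.toIdeal
  have hε_sq : 0 < ε ^ 2 := pow_pos hε 2
  have hp' : IsIdempotentElem (π p) := hp.2.map π
  have hp_one_of_left (h : HasLiftGE (ε ^ 2) (π (star (t * p) * (t * p)))) : π p = 1 := by
    have hunit := h.isUnit hε_sq
    rw [← mul_assoc, map_mul π _ p] at hunit
    exact eq_one_of_isIdempotentElem_of_isUnit_mul_left hp' hunit
  have hp_one_of_right (h : HasLiftGE (ε ^ 2) (π (t * p * star (t * p)))) : π p = 1 := by
    have hright : HasLiftGE (ε ^ 2) (π (t * star t)) := h.mono (hp.mul_mul_star_mul_le t)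
    have ht_unit : IsUnit (π t) := isUnit_of_isUnit_mul_left_of_isUnit_mul_right
      (map_mul π _ t ▸ ((ht I).2 hright).isUnit hε_sq) (map_mul π t _ ▸ hright.isUnit hε_sq)
    have hunit := h.isUnit hε_sq
    rw [map_mul, map_mul] at hunit
    exact eq_one_of_isIdempotentElem_of_isUnit_mul_mul hp' ht_unit hunit
  have hiff (hp_one : π p = 1) : HasLiftGE (ε ^ 2) (π (star (t * p) * (t * p))) ↔
      HasLiftGE (ε ^ 2) (π (t * p * star (t * p))) := by
    have htI : HasLiftGE (ε ^ 2) (π (star t * t)) ↔ HasLiftGE (ε ^ 2) (π (t * star t)) := ht I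
    simpa only [map_mul, star_mul, hp.1.star_eq, hp_one, one_mul, mul_one] using htI
  exact ⟨fun h ↦ (hiff (hp_one_of_left h)).1 h, fun h ↦ (hiff (hp_one_of_right h)).2 h⟩

end AlmostRegular

/-- If `t` is `ε`-almost regular and `p` is a projection, then `t * p` is
`ε`-almost regular; and if `t ∈ R(A)`, then `t * p ∈ R(A)`. -/
theorem almostRegular_mul_proj {A : Type*} [CStarAlgebra A] (ε : ℝ) (hε : 0 < ε)
    (p : A) (hp : IsProjection p) (t : A) :
    (AlmostRegular ε t → AlmostRegular ε (t * p)) ∧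
    (t ∈ regSet A → t * p ∈ regSet A) :=
  ⟨.mul_isProjection hε hp, mul_mem_regSet_of_isIdempotentElem hp.2⟩
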